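/- arXiv:1103.4068 — 2 statements merged into one kernel-verified Lean document; each statement's English description precedes it below -/
import Mathlib

section
/- For positive integers n and k, there is a bijection between the set S(n,k) of staircase arrays (C_0, C_1, …, C_{n−1}), where C_0 = ∅ and C_i is a vector of length i with entries in [k] for 1 ≤ i ≤ n−1, and the set I(n,k) of k-ary trees with n vertices equipped with a staircase labeling; consequently |I(n,k)| = k^{1+2+⋯+(n−1)}. -/
/-!
The bijection sends a labeled tree to the list of its labels sorted by length, and its inverse
inserts `C_0, C_1, …` one after the other, as in a digital search tree: `C_j`, on reaching the
vertex labeled `C_i`, moves on to the child whose index is the `(i+1)`-st entry of `C_j`.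

The proof fixes the array `C` and records a labeling only through the lengths `ℓ p` of the labels,
so that the label at `p` is `C (ℓ p)`. For any finite set `A` of lengths there is exactly one pair
`(T, ℓ)` in which the vertices of `T` carry each length of `A` once and the entry condition holds
(`Good.exists_tree`, `Good.unique`). This is an induction on `|A|`: the root must carry `m = min A`,
because the entry condition forces every other label to have an entry in place `m + 1`, and the
`r`-th subtree must carry exactly those `j ∈ A` for which the `(m+1)`-st entry of `C_j` is `r`.
Taking `A = {0, …, n-1}` gives the bijection; that a tree with `n` vertices and distinct lengths
below `n` uses every length follows from `KTree.card_positions`.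
-/


/-- A `k`-ary tree: every vertex has exactly `k` subtrees in linear order,
each possibly empty.  `nil` denotes the empty tree. -/
inductive KTree (k : ℕ) : Type
  | nil : KTree k
  | node : (Fin k → KTree k) → KTree k

namespace KTree

variable {k : ℕ}

/-- The number of vertices of a `k`-ary tree. -/
def count : KTree k → ℕ
  | nil => 0
  | node c => 1 + ∑ i, count (c i)

/-- The multiset of hook lengths of a `k`-ary tree: the hook length of a vertex
is the number of vertices of the subtree rooted at that vertex. -/
def hooks : KTree k → Multiset ℕ
  | nil => 0
  | node c => count (node c) ::ₘ ∑ i, hooks (c i)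

/-- The multiset of the values `f_u` over all vertices `u`, where `f_u` is the
number of vertices on the path from the root to `u` (including both
endpoints, so the root contributes `1`). -/
def fvals : KTree k → Multiset ℕ
  | nil => 0
  | node c => 1 ::ₘ ∑ i, (fvals (c i)).map (· + 1)

/-- The subtree of a `k`-ary tree at position `p`, a list of child indices. -/
def sub : KTree k → List (Fin k) → KTree k
  | t, [] => t
  | nil, _ :: _ => nil
  | node c, i :: p => sub (c i) p

/-- A `k`-ary tree is complete if every internal vertex has either all of its
`k` subtrees empty or all of them nonempty. -/
def IsComplete : KTree k → Prop
  | nil => True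
  | node c => ((∀ i, c i = nil) ∨ (∀ i, c i ≠ nil)) ∧ ∀ i, IsComplete (c i)

end KTree

/-- A staircase labeling of a `k`-ary tree `T` with `n` vertices: each vertex
(identified with its position, a list of child indices) receives a vector over
`[k]` (represented by `Fin k`); the labels are `C_0, C_1, …, C_{n-1}` where
`C_i` has length `i` (equivalently, the label lengths are distinct and `< n`);
along any path from the root to a leaf the label lengths strictly increase;
and whenever a vertex `u` labeled by a vector of length `i` has a descendant
`v` reached through the `r`-th child of `u`, the `(i+1)`-st entry of the label
of `v` equals `r`. -/
structure Staircase (k n : ℕ) (T : KTree k) where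
  lab : {p : List (Fin k) // T.sub p ≠ KTree.nil} → List (Fin k)
  length_lt : ∀ p, (lab p).length < n
  length_inj : Function.Injective fun p => (lab p).length
  length_mono : ∀ (p : List (Fin k)) (i : Fin k) (hp : T.sub p ≠ KTree.nil)
    (hpi : T.sub (p ++ [i]) ≠ KTree.nil),
    (lab ⟨p, hp⟩).length < (lab ⟨p ++ [i], hpi⟩).length
  entry_eq : ∀ (p q : List (Fin k)) (r : Fin k) (hp : T.sub p ≠ KTree.nil)
    (hq : T.sub (p ++ r :: q) ≠ KTree.nil),
    (lab ⟨p ++ r :: q, hq⟩)[(lab ⟨p, hp⟩).length]? = some r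

/-! ### Positions of vertices -/

namespace KTree

variable {k : ℕ}

theorem nil_sub (p : List (Fin k)) : (nil : KTree k).sub p = nil := by
  cases p <;> rfl

theorem sub_append (T : KTree k) (p q : List (Fin k)) : T.sub (p ++ q) = (T.sub p).sub q := by
  induction p generalizing T with
  | nil => simp [sub]
  | cons i p ih =>
    cases T with
    | nil => simp [sub, nil_sub]
    | node c => simpa [sub] using ih (c i)

theorem sub_ne_nil_of_append {T : KTree k} {p q : List (Fin k)} (h : T.sub (p ++ q) ≠ nil) :
    T.sub p ≠ nil := by
  intro h'
  rw [sub_append, h', nil_sub] at h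
  exact h rfl

/-- The positions of vertices in `T`. -/
abbrev Pos (T : KTree k) : Type := {p : List (Fin k) // T.sub p ≠ nil}

/-- A vertex of `node c` is either the root or a vertex of one of the subtrees `c i`. -/
def posNodeEquiv (c : Fin k → KTree k) : Pos (node c) ≃ Option (Σ i, Pos (c i)) where
  toFun
    | ⟨[], _⟩ => none
    | ⟨i :: p, h⟩ => some ⟨i, p, h⟩
  invFun
    | none => ⟨[], by simp [sub]⟩
    | some ⟨i, p, h⟩ => ⟨i :: p, h⟩
  left_inv := by rintro ⟨_ | ⟨i, p⟩, h⟩ <;> rfl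
  right_inv := by rintro (_ | ⟨i, p, h⟩) <;> rfl

theorem card_positions (T : KTree k) : Finite (Pos T) ∧ Nat.card (Pos T) = T.count := by
  induction T with
  | nil =>
    have : IsEmpty (Pos (nil : KTree k)) := ⟨fun p => p.2 (nil_sub _)⟩
    exact ⟨inferInstance, by simp [count]⟩
  | node c ih =>
    have : ∀ i, Finite (Pos (c i)) := fun i => (ih i).1
    refine ⟨Finite.of_equiv _ (posNodeEquiv c).symm, ?_⟩
    rw [Nat.card_congr (posNodeEquiv c), Finite.card_option, Nat.card_sigma, count, add_comm]
    simp [fun i => (ih i).2]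

end KTree

open KTree

/-! ### Existence and uniqueness of the tree for a given array -/

/-- The vertices of `T` carry, via the length function `ℓ`, each element of `A` exactly once, and
giving the label `C (ℓ p)` to the vertex `p` satisfies the entry condition of a staircase labeling.
The values of `ℓ` outside the vertices of `T` are irrelevant. Increase of the lengths along paths
is not required separately: it follows from `entry` when `C j` has length `j`. -/
structure Good {k : ℕ} (C : ℕ → List (Fin k)) (A : Finset ℕ) (T : KTree k)
    (ℓ : List (Fin k) → ℕ) : Prop where
  inj : ∀ p q, T.sub p ≠ nil → T.sub q ≠ nil → ℓ p = ℓ q → p = q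
  mem : ∀ a, a ∈ A ↔ ∃ p, T.sub p ≠ nil ∧ ℓ p = a
  entry : ∀ p q r, T.sub (p ++ r :: q) ≠ nil → (C (ℓ (p ++ r :: q)))[ℓ p]? = some r

namespace Good

variable {k : ℕ} {C : ℕ → List (Fin k)} {A : Finset ℕ}

theorem lt {T : KTree k} {ℓ : List (Fin k) → ℕ} (hC : ∀ j ∈ A, (C j).length = j)
    (h : Good C A T ℓ) (p q : List (Fin k)) (r : Fin k) (hT : T.sub (p ++ r :: q) ≠ nil) :
    ℓ p < ℓ (p ++ r :: q) := by
  have h1 := h.entry p q r hT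
  have h2 := hC _ ((h.mem _).2 ⟨_, hT, rfl⟩)
  obtain ⟨h3, -⟩ := List.getElem?_eq_some_iff.1 h1
  omega

theorem root_isLeast {c : Fin k → KTree k} {ℓ : List (Fin k) → ℕ}
    (hC : ∀ j ∈ A, (C j).length = j) (h : Good C A (node c) ℓ) :
    IsLeast (A : Set ℕ) (ℓ []) := by
  refine ⟨(h.mem _).2 ⟨[], by simp [sub], rfl⟩, fun a ha => ?_⟩
  obtain ⟨p, hp, rfl⟩ := (h.mem a).1 ha
  cases p with
  | nil => exact le_rfl
  | cons r q => exact (h.lt hC [] q r hp).le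

/-- The `r`-th subtree carries the lengths `j` for which the entry of `C j` tested at the root
is `r`. -/
theorem child {c : Fin k → KTree k} {ℓ : List (Fin k) → ℕ}
    (hC : ∀ j ∈ A, (C j).length = j) (h : Good C A (node c) ℓ) (r : Fin k) :
    Good C (A.filter fun j => (C j)[ℓ []]? = some r) (c r) (fun p => ℓ (r :: p)) where
  inj p q hp hq e := by
    have := h.inj (r :: p) (r :: q) hp hq e
    simpa using this
  mem a := by
    rw [Finset.mem_filter]
    constructor
    · rintro ⟨ha, hr⟩
      obtain ⟨p, hp, rfl⟩ := (h.mem a).1 ha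
      cases p with
      | nil =>
        have := hC _ ha
        obtain ⟨h3, -⟩ := List.getElem?_eq_some_iff.1 hr
        omega
      | cons s q =>
        have hs := h.entry [] q s hp
        simp only [List.nil_append] at hs
        rw [hs, Option.some_inj] at hr
        subst hr
        exact ⟨q, hp, rfl⟩
    · rintro ⟨p, hp, rfl⟩
      exact ⟨(h.mem _).2 ⟨r :: p, hp, rfl⟩, h.entry [] p r hp⟩
  entry p q s hT := h.entry (r :: p) q s hT

theorem filter_card_lt {m : ℕ} (hm : m ∈ A) (hC : ∀ j ∈ A, (C j).length = j) (r : Fin k) :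
    (A.filter fun j => (C j)[m]? = some r).card < A.card := by
  apply Finset.card_lt_card
  refine Finset.filter_ssubset.2 ⟨m, hm, fun hr => ?_⟩
  have := hC m hm
  obtain ⟨h3, -⟩ := List.getElem?_eq_some_iff.1 hr
  omega

theorem unique {T T' : KTree k} {ℓ ℓ' : List (Fin k) → ℕ}
    (hC : ∀ j ∈ A, (C j).length = j) (h : Good C A T ℓ) (h' : Good C A T' ℓ') :
    T = T' ∧ ∀ p, T.sub p ≠ nil → ℓ p = ℓ' p := by
  induction hN : A.card using Nat.strong_induction_on generalizing A T T' ℓ ℓ' with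
  | _ N ih =>
  cases T with
  | nil =>
    cases T' with
    | nil => exact ⟨rfl, fun p hp => absurd (nil_sub p) hp⟩
    | node c' =>
      obtain ⟨p, hp, -⟩ := (h.mem _).1 (h'.root_isLeast hC).1
      exact absurd (nil_sub p) hp
  | node c =>
    cases T' with
    | nil =>
      obtain ⟨p, hp, -⟩ := (h'.mem _).1 (h.root_isLeast hC).1
      exact absurd (nil_sub p) hp
    | node c' =>
      have hm : ℓ [] = ℓ' [] := (h.root_isLeast hC).unique (h'.root_isLeast hC)
      have key : ∀ r, c r = c' r ∧ ∀ p, (c r).sub p ≠ nil → ℓ (r :: p) = ℓ' (r :: p) := by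
        intro r
        have h1 := h.child hC r
        have h2 := h'.child hC r
        rw [← hm] at h2
        exact ih _ (hN ▸ filter_card_lt (h.root_isLeast hC).1 hC r)
          (fun j hj => hC j (Finset.mem_filter.1 hj).1) h1 h2 rfl
      refine ⟨congrArg _ (funext fun r => (key r).1), fun p hp => ?_⟩
      cases p with
      | nil => exact hm
      | cons r p => exact (key r).2 p hp

theorem exists_tree (hC : ∀ j ∈ A, (C j).length = j) : ∃ T ℓ, Good C A T ℓ := by
  induction hN : A.card using Nat.strong_induction_on generalizing A with
  | _ N ih =>
  rcases A.eq_empty_or_nonempty with rfl | hA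
  · exact ⟨nil, fun _ => 0, fun p _ hp => absurd (nil_sub p) hp,
      fun a => by simp [nil_sub], fun p q r hp => absurd (nil_sub _) hp⟩
  · set m := A.min' hA with hm
    have hmA : m ∈ A := A.min'_mem hA
    have key : ∀ r, ∃ T ℓ, Good C (A.filter fun j => (C j)[m]? = some r) T ℓ := fun r =>
      ih _ (hN ▸ filter_card_lt hmA hC r)
        (fun j hj => hC j (Finset.mem_filter.1 hj).1) rfl
    choose c L hL using key
    have hmem : ∀ r p, (c r).sub p ≠ nil → L r p ∈ A ∧ (C (L r p))[m]? = some r :=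
      fun r p hp => Finset.mem_filter.1 (((hL r).mem _).2 ⟨p, hp, rfl⟩)
    have hmC : (C m)[m]? = none := by simp [hC m hmA]
    refine ⟨node c, fun p => match p with | [] => m | r :: p => L r p, ?_, ?_, ?_⟩
    · rintro (_ | ⟨r, p⟩) (_ | ⟨s, q⟩) hp hq e
      · rfl
      · have h1 := (hmem s q hq).2
        simp only at e
        rw [← e, hmC] at h1
        cases h1
      · have h1 := (hmem r p hp).2
        simp only at e
        rw [e, hmC] at h1
        cases h1
      · simp only at e
        have h1 := (hmem r p hp).2
        rw [e, (hmem s q hq).2, Option.some_inj] at h1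
        subst h1
        rw [(hL s).inj p q hp hq e]
    · intro a
      constructor
      · intro ha
        rcases (A.min'_le a ha).eq_or_lt with e | hlt
        · exact ⟨[], by simp [sub], e⟩
        · have hlt' : m < (C a).length := by rw [hC a ha]; exact hlt
          obtain ⟨p, hp, e⟩ := ((hL (C a)[m]).mem a).1
            (Finset.mem_filter.2 ⟨ha, List.getElem?_eq_getElem hlt'⟩)
          exact ⟨(C a)[m] :: p, hp, e⟩
      · rintro ⟨_ | ⟨r, p⟩, hp, rfl⟩
        · exact hmA
        · exact (hmem r p hp).1
    · rintro (_ | ⟨s, p⟩) q r hp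
      · exact (hmem r q hp).2
      · exact (hL s).entry p q r hp

end Good

/-! ### The bijection -/

section Bijection

variable {k n : ℕ}

/-- The label length of the vertex `p`, with value `0` at positions that are not vertices. -/
noncomputable def Staircase.len {T : KTree k} (L : Staircase k n T) (p : List (Fin k)) : ℕ :=
  open Classical in if h : T.sub p ≠ nil then (L.lab ⟨p, h⟩).length else 0

theorem Staircase.len_eq {T : KTree k} (L : Staircase k n T) {p : List (Fin k)}
    (h : T.sub p ≠ nil) : L.len p = (L.lab ⟨p, h⟩).length := by
  simp [Staircase.len, h]

/-- In a tree with `n` vertices every length below `n` occurs as a label length, by counting. -/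
theorem Staircase.length_bijective {T : KTree k} (hT : T.count = n) (L : Staircase k n T) :
    Function.Bijective (fun p : Pos T => (⟨(L.lab p).length, L.length_lt p⟩ : Fin n)) := by
  have := (card_positions T).1
  rw [Nat.bijective_iff_injective_and_card]
  refine ⟨fun p q h => L.length_inj (by simpa using h), ?_⟩
  rw [(card_positions T).2, hT, Nat.card_fin]

/-- The extension of a staircase array to all of `ℕ`, with empty vectors beyond index `n - 1`. -/
def extendArray (C : Fin n → List (Fin k)) (j : ℕ) : List (Fin k) :=
  if h : j < n then C ⟨j, h⟩ else []

theorem extendArray_length {C : Fin n → List (Fin k)} (hC : ∀ i, (C i).length = i) :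
    ∀ j ∈ Finset.range n, (extendArray C j).length = j := by
  intro j hj
  simp [extendArray, Finset.mem_range.1 hj, hC]

/-- The lengths of a staircase labeling satisfy `Good` for the array `C` of its labels. -/
theorem Staircase.good {T : KTree k} (hT : T.count = n) (L : Staircase k n T)
    {C : Fin n → List (Fin k)}
    (h : ∀ p, C ⟨(L.lab p).length, L.length_lt p⟩ = L.lab p) :
    Good (extendArray C) (Finset.range n) T L.len where
  inj p q hp hq e := by
    rw [L.len_eq hp, L.len_eq hq] at e
    exact congrArg Subtype.val (L.length_inj e)
  mem a := by
    rw [Finset.mem_range]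
    constructor
    · intro ha
      obtain ⟨p, hp⟩ := (L.length_bijective hT).2 ⟨a, ha⟩
      exact ⟨p.1, p.2, by rw [L.len_eq p.2]; exact congrArg Fin.val hp⟩
    · rintro ⟨p, hp, rfl⟩
      rw [L.len_eq hp]
      exact L.length_lt _
  entry p q r hq := by
    have hp := sub_ne_nil_of_append hq
    rw [L.len_eq hp, L.len_eq hq, extendArray, dif_pos (L.length_lt _), h]
    exact L.entry_eq p q r hp hq

/-- The array of all labels of a labeled tree with `n` vertices, sorted by length. -/
noncomputable def toArray (X : (T : {T : KTree k // KTree.count T = n}) × Staircase k n T.val) :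
    {C : (i : Fin n) → List (Fin k) // ∀ i, (C i).length = i} :=
  ⟨fun i => X.2.lab ((Equiv.ofBijective _ (X.2.length_bijective X.1.2)).symm i), fun i =>
    congrArg Fin.val ((Equiv.ofBijective _ (X.2.length_bijective X.1.2)).apply_symm_apply i)⟩

theorem toArray_spec (X : (T : {T : KTree k // KTree.count T = n}) × Staircase k n T.val)
    (p : Pos X.1.val) :
    (toArray X).1 ⟨(X.2.lab p).length, X.2.length_lt p⟩ = X.2.lab p :=
  congrArg X.2.lab ((Equiv.ofBijective _ (X.2.length_bijective X.1.2)).symm_apply_apply p)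

theorem toArray_injective : Function.Injective (toArray (k := k) (n := n)) := by
  intro X Y hXY
  have hX := X.2.good X.1.2 (toArray_spec X)
  have hY := Y.2.good Y.1.2 (toArray_spec Y)
  have sX := toArray_spec X
  have sY := toArray_spec Y
  rw [← hXY] at hY sY
  obtain ⟨hT, hl⟩ := Good.unique (extendArray_length (toArray X).2) hX hY
  generalize (toArray X).1 = C at sX sY
  clear hX hY hXY
  obtain ⟨⟨T, hT1⟩, L⟩ := X
  obtain ⟨⟨T', hT2⟩, L'⟩ := Y
  dsimp only at hT hl sX sY
  subst hT
  have : L.lab = L'.lab := by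
    funext p
    have h := hl p.1 p.2
    rw [L.len_eq p.2, L'.len_eq p.2] at h
    rw [← sX p, ← sY p]
    exact congrArg C (Fin.ext h)
  cases L
  cases L'
  cases this
  rfl

theorem toArray_surjective : Function.Surjective (toArray (k := k) (n := n)) := by
  rintro ⟨C, hC⟩
  have hE := extendArray_length hC
  obtain ⟨T, ℓ, h⟩ := Good.exists_tree hE
  have hlt : ∀ p : Pos T, ℓ p.1 < n := fun p =>
    Finset.mem_range.1 ((h.mem _).2 ⟨p.1, p.2, rfl⟩)
  have hlen : ∀ p : Pos T, (extendArray C (ℓ p.1)).length = ℓ p.1 := fun p =>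
    hE _ (Finset.mem_range.2 (hlt p))
  have hcount : T.count = n := by
    rw [← (card_positions T).2, ← Nat.card_fin n]
    refine Nat.card_congr (Equiv.ofBijective (fun p : Pos T => (⟨ℓ p.1, hlt p⟩ : Fin n)) ⟨?_, ?_⟩)
    · intro p q e
      exact Subtype.ext (h.inj _ _ p.2 q.2 (congrArg Fin.val e))
    · intro i
      obtain ⟨p, hp, e⟩ := (h.mem i).1 (Finset.mem_range.2 i.2)
      exact ⟨⟨p, hp⟩, Fin.ext e⟩
  let L : Staircase k n T :=
    { lab := fun p => extendArray C (ℓ p.1)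
      length_lt := fun p => by rw [hlen p]; exact hlt p
      length_inj := fun p q e => by
        simp only [hlen] at e
        exact Subtype.ext (h.inj _ _ p.2 q.2 e)
      length_mono := fun p i hp hpi => by
        rw [hlen ⟨p, hp⟩, hlen ⟨p ++ [i], hpi⟩]
        exact h.lt hE p [] i hpi
      entry_eq := fun p q r hp hq => by
        rw [hlen ⟨p, hp⟩]
        exact h.entry p q r hq }
  refine ⟨⟨⟨T, hcount⟩, L⟩, Subtype.ext (funext fun i => ?_)⟩
  obtain ⟨p, hp⟩ := (L.length_bijective hcount).2 i
  have h1 := toArray_spec ⟨⟨T, hcount⟩, L⟩ p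
  rw [← hp]
  refine h1.trans ?_
  change extendArray C (ℓ p.1) = _
  rw [extendArray, dif_pos (hlt p)]
  exact congrArg C (Fin.ext (hlen p).symm)

theorem card_arrays (n k : ℕ) :
    Nat.card {C : (i : Fin n) → List (Fin k) // ∀ i, (C i).length = i}
      = k ^ (∑ i ∈ Finset.range n, i) := by
  have e : {C : (i : Fin n) → List (Fin k) // ∀ i, (C i).length = i} ≃
      ((i : Fin n) → List.Vector (Fin k) i) :=
    Equiv.subtypePiEquivPi (p := fun (i : Fin n) (l : List (Fin k)) => l.length = i)
  rw [Nat.card_congr e, Nat.card_pi, ← Finset.prod_pow_eq_pow_sum,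
    ← Fin.prod_univ_eq_prod_range (fun i => k ^ i) n]
  simp [Nat.card_eq_fintype_card, card_vector]

end Bijection

/-- There is a bijection between the set `S(n,k)` of staircase arrays
`(C_0, C_1, …, C_{n-1})`, where `C_i` is a vector of length `i` with entries
in `[k]` (so `C_0 = ∅`), and the set `I(n,k)` of `k`-ary trees with `n`
vertices equipped with a staircase labeling; consequently
`|I(n,k)| = k^(1+2+⋯+(n-1))`. -/
theorem staircase_arrays_equiv_staircase_trees (n k : ℕ) (hn : 0 < n) (hk : 0 < k) :
    Nonempty
      ({C : (i : Fin n) → List (Fin k) // ∀ i, (C i).length = i} ≃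
        (T : {T : KTree k // KTree.count T = n}) × Staircase k n T.val) ∧
    Nat.card ((T : {T : KTree k // KTree.count T = n}) × Staircase k n T.val)
      = k ^ (∑ i ∈ Finset.range n, i) := by
  have e := Equiv.ofBijective _ ⟨toArray_injective (k := k) (n := n), toArray_surjective⟩
  exact ⟨⟨e.symm⟩, by rw [Nat.card_congr e, card_arrays]⟩
end

section
/- For every positive integer n, the sum over all complete binary trees T with 2n+1 vertices of 1/(∏_{h ∈ H(T)} h·2^{h-1}) equals 1/(2^n·(2n+1)!), where H(T) is the multiset of hook lengths of T. -/
/-!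
Let `a n` be the sum over complete binary trees with `2n+1` vertices. Removing the root of such a
tree with `n = k+1` leaves an ordered pair of nonempty complete trees with `2i+1` and `2j+1`
vertices, `i + j = k`, and the root contributes the factor `(2k+3) * 2^(2k+2)`. Hence
`(2k+3) * 2^(2k+2) * a (k+1) = ∑_{i+j=k} a i * a j`. By strong induction the claim
`a n = 1 / (2^n (2n+1)!)` reduces to `∑_i C(2k+2, 2i+1) = 2^(2k+1)`: half of the subsets of a
nonempty set have odd size (`sum_choose_odd`), here deduced from Pascal's rule.
The induction (`exists_finset_sum`) also produces the finite set of trees summed over.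
-/

/-- A binary tree: every vertex has an ordered pair of (possibly empty)
subtrees.  `leaf` denotes the empty tree. -/
inductive BinTree : Type
  | leaf : BinTree
  | node : BinTree → BinTree → BinTree

namespace BinTree

/-- The number of vertices of a binary tree. -/
def count : BinTree → ℕ
  | leaf => 0
  | node l r => count l + count r + 1

/-- The multiset of hook lengths of a binary tree: the hook length of a vertex
is the number of vertices of the subtree rooted at that vertex. -/
def hooks : BinTree → Multiset ℕ
  | leaf => 0
  | node l r => (count l + count r + 1) ::ₘ (hooks l + hooks r)

/-- A binary tree is complete if every internal vertex has two empty subtrees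
or two nonempty subtrees. -/
def IsComplete : BinTree → Prop
  | leaf => True
  | node l r => ((l = leaf ∧ r = leaf) ∨ (l ≠ leaf ∧ r ≠ leaf)) ∧
      IsComplete l ∧ IsComplete r

/-- The complete binary tree obtained from a binary tree by attaching a new
leaf vertex at each empty subtree position. -/
def toComplete : BinTree → BinTree
  | leaf => node leaf leaf
  | node l r => node (toComplete l) (toComplete r)

end BinTree

namespace BinTree

/-- The weight `1 / ∏ h * 2^(h-1)` of a tree, the product being over its hook lengths. -/
def weight (T : BinTree) : ℚ :=
  1 / ((hooks T).map fun h : ℕ => (h : ℚ) * (2 : ℚ) ^ (h - 1)).prod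

lemma weight_node (l r : BinTree) :
    weight (node l r) = weight l * weight r /
      (((count l + count r + 1 : ℕ) : ℚ) * 2 ^ (count l + count r)) := by
  simp only [weight, hooks, Multiset.map_cons, Multiset.map_add, Multiset.prod_cons,
    Multiset.prod_add, Nat.add_sub_cancel]
  rw [div_mul_div_comm, div_div, one_mul, mul_comm]

lemma count_eq_zero {T : BinTree} : T.count = 0 ↔ T = leaf := by
  cases T <;> simp [count]

/-- A nonempty complete binary tree has an odd number of vertices. -/
lemma IsComplete.exists_count {T : BinTree} (hT : T.IsComplete) (h : T ≠ leaf) :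
    ∃ i, T.count = 2 * i + 1 := by
  induction T with
  | leaf => exact absurd rfl h
  | node l r ihl ihr =>
    obtain ⟨⟨rfl, rfl⟩ | ⟨hl, hr⟩, cl, cr⟩ := hT
    · exact ⟨0, rfl⟩
    · obtain ⟨i, hi⟩ := ihl cl hl
      obtain ⟨j, hj⟩ := ihr cr hr
      exact ⟨i + j + 1, by simp only [count]; omega⟩

lemma sum_choose_odd (k : ℕ) :
    ∑ i ∈ Finset.range (k + 1), (2 * k + 2).choose (2 * i + 1) = 2 ^ (2 * k + 1) := by
  have pair : ∀ (f : ℕ → ℕ) (m : ℕ), ∑ i ∈ Finset.range m, (f (2 * i) + f (2 * i + 1))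
      = ∑ j ∈ Finset.range (2 * m), f j := by
    intro f m
    induction m with
    | zero => simp
    | succ m ih =>
      rw [Finset.sum_range_succ, ih, show 2 * (m + 1) = 2 * m + 1 + 1 by ring,
        Finset.sum_range_succ, Finset.sum_range_succ, add_assoc]
  rw [← Nat.sum_range_choose (2 * k + 1), show 2 * k + 1 + 1 = 2 * (k + 1) by ring, ← pair]
  exact Finset.sum_congr rfl fun i _ => Nat.choose_succ_succ _ _

/-- The convolution identity satisfied by the closed form `1 / (2^n (2n+1)!)`. -/
lemma sum_closed_form (k : ℕ) :
    ∑ p ∈ Finset.HasAntidiagonal.antidiagonal k,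
      (1 / ((2 : ℚ) ^ p.1 * (2 * p.1 + 1).factorial)) *
        (1 / ((2 : ℚ) ^ p.2 * (2 * p.2 + 1).factorial))
      = 2 ^ (k + 1) / (2 * k + 2).factorial := by
  have key : ∀ p ∈ Finset.HasAntidiagonal.antidiagonal k,
      (1 / ((2 : ℚ) ^ p.1 * (2 * p.1 + 1).factorial)) *
        (1 / ((2 : ℚ) ^ p.2 * (2 * p.2 + 1).factorial))
      = ((2 * k + 2).choose (2 * p.1 + 1) : ℕ) / (2 ^ k * (2 * k + 2).factorial) := by
    rintro ⟨i, j⟩ hp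
    obtain rfl : i + j = k := by simpa using hp
    have h := Nat.add_choose_mul_factorial_mul_factorial (2 * j + 1) (2 * i + 1)
    rw [show 2 * j + 1 + (2 * i + 1) = 2 * (i + j) + 2 by ring] at h
    have h' : (((2 * (i + j) + 2).choose (2 * i + 1) : ℕ) : ℚ) * (2 * i + 1).factorial *
        (2 * j + 1).factorial = (2 * (i + j) + 2).factorial := by
      rw [← h]; push_cast; ring
    have h1 : ((2 * i + 1).factorial : ℚ) ≠ 0 := by positivity
    have h2 : ((2 * j + 1).factorial : ℚ) ≠ 0 := by positivity
    have h3 : ((2 * (i + j) + 2).factorial : ℚ) ≠ 0 := by positivity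
    rw [div_mul_div_comm, div_eq_div_iff (by positivity) (by positivity), ← h', pow_add]
    ring
  rw [Finset.sum_congr rfl key, ← Finset.sum_div,
    Finset.Nat.sum_antidiagonal_eq_sum_range_succ_mk, ← Nat.cast_sum, sum_choose_odd]
  have h3 : ((2 * k + 2).factorial : ℚ) ≠ 0 := by positivity
  rw [div_eq_div_iff (by positivity) (by positivity)]
  push_cast
  ring

/-- The complete trees with `2n+1` vertices form a finite set, and their weights sum to the
closed form. -/
lemma exists_finset_sum (n : ℕ) :
    ∃ s : Finset BinTree, (∀ T, T ∈ s ↔ T.count = 2 * n + 1 ∧ T.IsComplete) ∧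
      ∑ T ∈ s, weight T = 1 / ((2 : ℚ) ^ n * (2 * n + 1).factorial) := by
  classical
  induction n using Nat.strong_induction_on with
  | _ n ih =>
  rcases n with _ | k
  · refine ⟨{node leaf leaf}, fun T => ?_, by simp [weight, hooks, count]⟩
    rw [Finset.mem_singleton]
    constructor
    · rintro rfl
      simp [count, IsComplete]
    · rintro ⟨h, -⟩
      cases T with
      | leaf => simp [count] at h
      | node l r =>
        simp only [count] at h
        rw [count_eq_zero.1 (show l.count = 0 by omega),
          count_eq_zero.1 (show r.count = 0 by omega)]
  · choose! F hF hS using ih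
    -- Trees with `2k+3` vertices, indexed by the sizes of the two root subtrees.
    let S : Finset (Σ _ : ℕ × ℕ, BinTree × BinTree) :=
      (Finset.HasAntidiagonal.antidiagonal k).sigma fun p => F p.1 ×ˢ F p.2
    have hmem : ∀ x, x ∈ S ↔ x.1.1 + x.1.2 = k ∧
        (x.2.1.count = 2 * x.1.1 + 1 ∧ x.2.1.IsComplete) ∧
        (x.2.2.count = 2 * x.1.2 + 1 ∧ x.2.2.IsComplete) := by
      intro x
      simp only [S, Finset.mem_sigma, Finset.HasAntidiagonal.mem_antidiagonal, Finset.mem_product]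
      refine and_congr_right fun h => ?_
      rw [hF _ (by omega), hF _ (by omega)]
    refine ⟨S.image fun x => node x.2.1 x.2.2, fun T => ?_, ?_⟩
    · rw [Finset.mem_image]
      constructor
      · rintro ⟨x, hx, rfl⟩
        obtain ⟨h, ⟨h1, c1⟩, h2, c2⟩ := (hmem x).1 hx
        refine ⟨by simp only [count]; omega, Or.inr ⟨?_, ?_⟩, c1, c2⟩
        · intro h; simp [h, count] at h1
        · intro h; simp [h, count] at h2
      · rintro ⟨h, hc⟩
        cases T with
        | leaf => simp [count] at h
        | node l r =>
          obtain ⟨⟨rfl, rfl⟩ | ⟨hl, hr⟩, cl, cr⟩ := hc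
          · simp [count] at h
          · obtain ⟨i, hi⟩ := cl.exists_count hl
            obtain ⟨j, hj⟩ := cr.exists_count hr
            simp only [count] at h
            exact ⟨⟨(i, j), (l, r)⟩, (hmem _).2 ⟨by dsimp only; omega, ⟨hi, cl⟩, hj, cr⟩, rfl⟩
    · rw [Finset.sum_image]
      · have hw : ∀ x ∈ S, weight (node x.2.1 x.2.2) = weight x.2.1 * weight x.2.2 /
            (((2 * k + 3 : ℕ) : ℚ) * 2 ^ (2 * k + 2)) := by
          intro x hx
          obtain ⟨h, ⟨h1, -⟩, h2, -⟩ := (hmem x).1 hx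
          rw [weight_node, show x.2.1.count + x.2.2.count = 2 * k + 2 by omega]
        rw [Finset.sum_congr rfl hw, ← Finset.sum_div, Finset.sum_sigma]
        have hp : ∀ p ∈ Finset.HasAntidiagonal.antidiagonal k,
            ∑ y ∈ F p.1 ×ˢ F p.2, weight y.1 * weight y.2 =
            (1 / ((2 : ℚ) ^ p.1 * (2 * p.1 + 1).factorial)) *
              (1 / ((2 : ℚ) ^ p.2 * (2 * p.2 + 1).factorial)) := by
          intro p hp
          rw [Finset.HasAntidiagonal.mem_antidiagonal] at hp
          rw [← hS p.1 (by omega), ← hS p.2 (by omega), Finset.sum_mul_sum,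
            Finset.sum_product]
        rw [Finset.sum_congr rfl hp, sum_closed_form,
          show 2 * (k + 1) + 1 = (2 * k + 2) + 1 by ring, Nat.factorial_succ (2 * k + 2)]
        have h3 : ((2 * k + 2).factorial : ℚ) ≠ 0 := by positivity
        rw [div_div, div_eq_div_iff (by positivity) (by positivity)]
        push_cast
        ring
      · -- The sizes are determined by the subtrees, so `node` is injective on the index set.
        rintro ⟨⟨i, j⟩, l, r⟩ hx ⟨⟨i', j'⟩, l', r'⟩ hy h
        obtain ⟨-, ⟨h1, -⟩, h2, -⟩ := (hmem _).1 hx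
        obtain ⟨-, ⟨h3, -⟩, h4, -⟩ := (hmem _).1 hy
        obtain ⟨rfl, rfl⟩ := BinTree.node.inj h
        dsimp only at h1 h2 h3 h4
        obtain rfl : i = i' := by omega
        obtain rfl : j = j' := by omega
        rfl

end BinTree

/-- For every positive integer `n`, the sum over all complete binary trees `T`
with `2n+1` vertices of `1 / ∏_{h ∈ H(T)} (h · 2^(h-1))` equals
`1 / (2^n · (2n+1)!)`. -/
theorem han_second_formula_complete (n : ℕ) (hn : 0 < n) :
    ∑ᶠ T ∈ {T : BinTree | T.count = 2 * n + 1 ∧ T.IsComplete},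
      (1 : ℚ) / ((BinTree.hooks T).map fun h : ℕ => (h : ℚ) * (2 : ℚ) ^ (h - 1)).prod
      = 1 / ((2 : ℚ) ^ n * (2 * n + 1).factorial) := by
  obtain ⟨s, hs, hsum⟩ := BinTree.exists_finset_sum n
  have hset : {T : BinTree | T.count = 2 * n + 1 ∧ T.IsComplete} = (s : Set BinTree) := by
    ext T
    exact (hs T).symm
  rw [hset, finsum_mem_coe_finset]
  exact hsum
end
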